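/- For every n ≥ 1 and every degree vector a ∈ ℕ^n, the element k_n(a) ∈ F(n) defined by the recursion k_1 = leaf, k_n(a_1,…,a_n) = Σ_{j=1}^{n−1} (−1)^{a_1+⋯+a_j+j−1} graft(k_j(a_1,…,a_j), k_{n−j}(a_{j+1},…,a_n)), equals the signed sum over all binary trees: k_n(a) = Σ_{t ∈ Y_n} (−1)^{P(t,a)} t, where P(t,a) is the sum over all vertices V of t (root included) of the degrees of the decorated left subtrees of V. -/

import Mathlib

/-- Planar rooted trees with leaves decorated by natural numbers (the degrees of
the decorations). -/
inductive DTree : Type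
  | leaf (a : ℕ) : DTree
  | node (children : List DTree) : DTree

namespace DTree

mutual
  /-- degree: sum of the leaf decorations plus the number of vertices. -/
  def deg : DTree → ℕ
    | leaf a => a
    | node cs => 1 + degList cs
  def degList : List DTree → ℕ
    | [] => 0
    | c :: rest => deg c + degList rest
end

mutual
  /-- `P(t,a)`: the sum, over all vertices `V` of `t` (root included), of the
  degrees of the decorated left (= first-child) subtrees of `V`. -/
  def Pval : DTree → ℕ
    | leaf _ => 0
    | node [] => 0
    | node (c :: rest) => deg c + Pval c + PvalList rest
  def PvalList : List DTree → ℕ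
    | [] => 0
    | c :: rest => Pval c + PvalList rest
end

mutual
  /-- the list of leaf decorations, in planar (left-to-right) order. -/
  def leafLabels : DTree → List ℕ
    | leaf a => [a]
    | node cs => leafLabelsList cs
  def leafLabelsList : List DTree → List ℕ
    | [] => []
    | c :: rest => leafLabels c ++ leafLabelsList rest
end

/-- binary trees: every vertex has exactly two children. -/
inductive IsBinary : DTree → Prop
  | leaf (a : ℕ) : IsBinary (leaf a)
  | node (t₁ t₂ : DTree) : IsBinary t₁ → IsBinary t₂ → IsBinary (node [t₁, t₂])

end DTree

/-- grafting, extended bilinearly: on basis trees,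
`graftL t₁ t₂` is the binary tree whose root has ordered children `t₁, t₂`. -/
noncomputable def graftL : (DTree →₀ ℚ) →ₗ[ℚ] (DTree →₀ ℚ) →ₗ[ℚ] (DTree →₀ ℚ) :=
  Finsupp.lsum ℚ fun t₁ => LinearMap.toSpanSingleton ℚ ((DTree →₀ ℚ) →ₗ[ℚ] (DTree →₀ ℚ))
    (Finsupp.lsum ℚ fun t₂ => LinearMap.toSpanSingleton ℚ (DTree →₀ ℚ)
      (Finsupp.single (DTree.node [t₁, t₂]) 1))

/-- the element `k_n[a_1,…,a_n]`, defined by the recursion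
`k_1[a] = leaf a`,
`k_n[a] = Σ_{j=1}^{n-1} (−1)^{a_1+⋯+a_j+j−1} graft(k_j[a_{≤j}], k_{n−j}[a_{>j}])`. -/
noncomputable def kEl : List ℕ → (DTree →₀ ℚ)
  | [] => 0
  | [a] => Finsupp.single (DTree.leaf a) 1
  | a :: b :: rest =>
      ∑ j ∈ (Finset.Ico 1 (a :: b :: rest).length).attach,
        ((-1 : ℚ) ^ (((a :: b :: rest).take j.1).sum + j.1 - 1)) •
          graftL (kEl ((a :: b :: rest).take j.1)) (kEl ((a :: b :: rest).drop j.1))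
termination_by l => l.length
decreasing_by
  · have hj := Finset.mem_Ico.mp j.2
    simp only [List.length_take, List.length_drop, List.length_cons] at hj ⊢
    omega
  · have hj := Finset.mem_Ico.mp j.2
    simp only [List.length_take, List.length_drop, List.length_cons] at hj ⊢
    omega

theorem graftL_apply_node (x y : DTree →₀ ℚ) (t₁ t₂ : DTree) :
    graftL x y (DTree.node [t₁, t₂]) = x t₁ * y t₂ := by
  classical
  induction x using Finsupp.induction_linear with
  | zero => simp
  | add f g hf hg => simp [hf, hg, add_mul]
  | single s a =>
    induction y using Finsupp.induction_linear with
    | zero => simp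
    | add f g hf hg => rw [map_add, Finsupp.add_apply, hf, hg, Finsupp.add_apply, mul_add]
    | single u b =>
      by_cases h1 : s = t₁ <;> by_cases h2 : u = t₂ <;>
        simp [graftL, Finsupp.single_apply, h1, h2]

theorem graftL_apply_other (x y : DTree →₀ ℚ) (t : DTree)
    (ht : ∀ t₁ t₂, t ≠ DTree.node [t₁, t₂]) : graftL x y t = 0 := by
  classical
  induction x using Finsupp.induction_linear with
  | zero => simp
  | add f g hf hg => simp [hf, hg]
  | single s a =>
    induction y using Finsupp.induction_linear with
    | zero => simp
    | add f g hf hg => rw [map_add, Finsupp.add_apply, hf, hg, add_zero]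
    | single u b =>
      have := (ht s u).symm
      simp [graftL, Finsupp.single_apply, this]

theorem kEl_two (l : List ℕ) (hl : 2 ≤ l.length) :
    kEl l = ∑ j ∈ Finset.Ico 1 l.length, ((-1 : ℚ) ^ ((l.take j).sum + j - 1)) •
          graftL (kEl (l.take j)) (kEl (l.drop j)) := by
  match l, hl with
  | a :: b :: rest, _ =>
    rw [kEl]
    exact Finset.sum_attach (Finset.Ico 1 (a :: b :: rest).length) (fun j =>
      ((-1 : ℚ) ^ (((a :: b :: rest).take j).sum + j - 1)) •
          graftL (kEl ((a :: b :: rest).take j)) (kEl ((a :: b :: rest).drop j)))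

theorem labels_pos {t : DTree} (h : t.IsBinary) : 1 ≤ t.leafLabels.length := by
  induction h with
  | leaf a => simp [DTree.leafLabels]
  | node t₁ t₂ _ _ h1 h2 => simp [DTree.leafLabels, DTree.leafLabelsList]; omega

theorem deg_binary {t : DTree} (h : t.IsBinary) :
    t.deg + 1 = t.leafLabels.sum + t.leafLabels.length := by
  induction h with
  | leaf a => simp [DTree.leafLabels, DTree.deg]
  | node t₁ t₂ _ _ h1 h2 =>
    simp [DTree.leafLabels, DTree.leafLabelsList, DTree.deg, DTree.degList]; omega

open Classical in
theorem kEl_closed (n : ℕ) : ∀ (l : List ℕ), l.length = n → ∀ t : DTree,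
    kEl l t = if t.IsBinary ∧ t.leafLabels = l then (-1 : ℚ) ^ t.Pval else 0 := by
  induction n using Nat.strong_induction_on with
  | _ n ih =>
  intro l hln t
  by_cases h2 : 2 ≤ l.length
  · rw [kEl_two l h2, Finsupp.finsetSum_apply]
    simp only [Finsupp.smul_apply, smul_eq_mul]
    by_cases ht : ∃ t₁ t₂, t = DTree.node [t₁, t₂]
    · obtain ⟨t₁, t₂, rfl⟩ := ht
      have hstep : ∀ j ∈ Finset.Ico 1 l.length,
          (-1 : ℚ) ^ ((l.take j).sum + j - 1) *
            graftL (kEl (l.take j)) (kEl (l.drop j)) (DTree.node [t₁, t₂]) =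
          if j = t₁.leafLabels.length then
            (if (DTree.node [t₁, t₂]).IsBinary ∧ (DTree.node [t₁, t₂]).leafLabels = l
              then (-1 : ℚ) ^ (DTree.node [t₁, t₂]).Pval else 0) else 0 := by
        intro j hj
        rw [Finset.mem_Ico] at hj
        rw [graftL_apply_node, ih (l.take j).length (by simp; omega) _ rfl,
          ih (l.drop j).length (by simp; omega) _ rfl]
        have hlab : (DTree.node [t₁, t₂]).leafLabels = t₁.leafLabels ++ t₂.leafLabels := by
          simp [DTree.leafLabels, DTree.leafLabelsList]
        have hP : (DTree.node [t₁, t₂]).Pval = t₁.deg + t₁.Pval + t₂.Pval := by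
          simp [DTree.Pval, DTree.PvalList]
        by_cases hA : t₁.IsBinary ∧ t₁.leafLabels = l.take j
        · by_cases hB : t₂.IsBinary ∧ t₂.leafLabels = l.drop j
          · have hj' : j = t₁.leafLabels.length := by rw [hA.2]; simp; omega
            have hC : (DTree.node [t₁, t₂]).IsBinary ∧
                (DTree.node [t₁, t₂]).leafLabels = l :=
              ⟨.node _ _ hA.1 hB.1, by rw [hlab, hA.2, hB.2, List.take_append_drop]⟩
            rw [if_pos hA, if_pos hB, if_pos hj', if_pos hC, hP, ← hA.2]
            have hd := deg_binary hA.1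
            have : t₁.leafLabels.sum + j - 1 = t₁.deg := by omega
            rw [this, pow_add, pow_add, mul_assoc]
          · rw [if_neg hB, mul_zero, mul_zero]
            split_ifs with h3 h4
            · exfalso
              obtain ⟨hb, hl⟩ := h4
              cases hb with
              | node _ _ hb1 hb2 =>
                exact hB ⟨hb2, by rw [← hl, hlab, h3]; simp⟩
            · rfl
            · rfl
        · rw [if_neg hA, zero_mul, mul_zero]
          split_ifs with h3 h4
          · exfalso
            obtain ⟨hb, hl⟩ := h4
            cases hb with
            | node _ _ hb1 hb2 =>
              exact hA ⟨hb1, by rw [← hl, hlab, h3]; simp⟩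
          · rfl
          · rfl
      rw [Finset.sum_congr rfl hstep, Finset.sum_ite_eq']
      split_ifs with h3 h4 h4
      · rfl
      · rfl
      · exfalso
        obtain ⟨hb, hl⟩ := h4
        cases hb with
        | node _ _ hb1 hb2 =>
          apply h3
          have p1 := labels_pos hb1
          have p2 := labels_pos hb2
          rw [← hl, Finset.mem_Ico]
          simp [DTree.leafLabels, DTree.leafLabelsList]
          constructor
          · exact p1
          · exact p2
      · rfl
    · push Not at ht
      rw [Finset.sum_eq_zero (fun j _ => by rw [graftL_apply_other _ _ _ ht, mul_zero]), if_neg]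
      rintro ⟨hb, hl⟩
      cases hb with
      | leaf a => rw [← hl] at h2; simp [DTree.leafLabels] at h2
      | node t₁ t₂ _ _ => exact ht _ _ rfl
  · match l, h2 with
    | [], _ =>
      rw [kEl, if_neg]
      · rfl
      · rintro ⟨hb, hl⟩
        have := labels_pos hb
        rw [hl] at this
        simp at this
    | [a], _ =>
      rw [kEl, Finsupp.single_apply]
      by_cases h : DTree.leaf a = t
      · subst h
        rw [if_pos rfl, if_pos ⟨.leaf a, by simp [DTree.leafLabels]⟩]
        simp [DTree.Pval]
      · rw [if_neg h, if_neg]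
        rintro ⟨hb, hl⟩
        cases hb with
        | leaf b => apply h; simp [DTree.leafLabels] at hl; rw [hl]
        | node t₁ t₂ h1 h2 =>
          have p1 := labels_pos h1
          have p2 := labels_pos h2
          have := congrArg List.length hl
          simp [DTree.leafLabels, DTree.leafLabelsList] at this
          omega
    | a :: b :: r, h2 => simp at h2

/-- the closed form of `k_n`:
`k_n[a] = Σ_{t ∈ Y_n} (−1)^{P(t,a)} t`, the signed sum over all binary trees
with `n` leaves decorated by `a`; stated coefficientwise in the free vector
space on decorated planar rooted trees. -/
theorem stmt_14 (l : List ℕ) (hl : l ≠ []) (t : DTree) :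
    (DTree.IsBinary t ∧ DTree.leafLabels t = l → kEl l t = (-1 : ℚ) ^ DTree.Pval t) ∧
    (¬ (DTree.IsBinary t ∧ DTree.leafLabels t = l) → kEl l t = 0) := by
  classical
  rw [kEl_closed l.length l rfl t]
  exact ⟨fun h => if_pos h, fun h => if_neg h⟩
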